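/- The intensity map und_{𝒳_1} : 𝒫_p(𝒳_1 × 𝒫_p(𝒳_2)) → 𝒫_p(𝒳_1 × 𝒳_2) satisfies W_p(und_{𝒳_1}(μ), und_{𝒳_1}(ν)) ≤ CW̄_p(μ, ν) for all μ, ν ∈ 𝒫_p(𝒳_1 × 𝒫_p(𝒳_2)); in particular und_{𝒳_1} is a contraction from (𝒫_p(𝒳_1 × 𝒫_p(𝒳_2)), SCW̄_p) to (𝒫_p(𝒳_1 × 𝒳_2), W_p). -/

import Mathlib

open MeasureTheory ProbabilityTheory ENNReal Filter Topology

noncomputable section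

namespace AWPaper

/-! ### Generic constructions -/

variable {α β : Type*}

/-- The set of couplings of two measures. -/
def Cpl [MeasurableSpace α] [MeasurableSpace β] (μ : Measure α) (ν : Measure β) :
    Set (Measure (α × β)) :=
  {π | π.map Prod.fst = μ ∧ π.map Prod.snd = ν}

/-- The `p`-Wasserstein distance (with values in `ℝ≥0∞`) associated to an
`ℝ≥0∞`-valued distance function `d`. -/
def Wp [MeasurableSpace α] (p : ℝ) (d : α → α → ℝ≥0∞) (μ ν : Measure α) : ℝ≥0∞ :=
  ⨅ π ∈ Cpl μ ν, (∫⁻ z, d z.1 z.2 ^ p ∂π) ^ (1 / p)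

/-- The topology generated by the open balls of an `ℝ≥0∞`-valued distance
function.  For a genuine metric this is the metric topology. -/
def ballTop (d : α → α → ℝ≥0∞) : TopologicalSpace α :=
  TopologicalSpace.generateFrom {s | ∃ x ε, 0 < ε ∧ s = {y | d x y < ε}}

/-- The product distance of two `ℝ≥0∞`-valued distances, `ℓ^p`-style. -/
def prodDist (p : ℝ) (d₁ : α → α → ℝ≥0∞) (d₂ : β → β → ℝ≥0∞) :
    α × β → α × β → ℝ≥0∞ :=
  fun u v => (d₁ u.1 v.1 ^ p + d₂ u.2 v.2 ^ p) ^ (1 / p)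

/-- Membership in the `p`-Wasserstein space: a probability measure with finite
`p`-th moment (w.r.t. the distance function `d`). -/
def MemPp [MeasurableSpace α] (p : ℝ) (d : α → α → ℝ≥0∞) (μ : Measure α) : Prop :=
  IsProbabilityMeasure μ ∧ ∃ x₀, ∫⁻ x, d x₀ x ^ p ∂μ ≠ ∞

/-- The weak topology on measures induced by integration of bounded continuous
functions, for a given topology `τ` on the base space. -/
def weakTop [MeasurableSpace α] (τ : TopologicalSpace α) : TopologicalSpace (Measure α) :=
  TopologicalSpace.induced
    (fun μ => fun f : @BoundedContinuousFunction α ℝ τ _ => ∫ x, f x ∂μ)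
    Pi.topologicalSpace

/-- The product topology built from two explicitly given topologies. -/
def prodTop (τ₁ : TopologicalSpace α) (τ₂ : TopologicalSpace β) : TopologicalSpace (α × β) :=
  TopologicalSpace.induced Prod.fst τ₁ ⊓ TopologicalSpace.induced Prod.snd τ₂

/-- An everywhere-defined version of the disintegration kernel: it agrees with
`Measure.condKernel` on finite measures. -/
def condK [MeasurableSpace α] [MeasurableSpace β] [StandardBorelSpace β] [Nonempty β]
    (ρ : Measure (α × β)) : Kernel α β :=
  letI := Classical.dec (IsFiniteMeasure ρ)
  if h : IsFiniteMeasure ρ then @Measure.condKernel α β _ _ _ _ ρ h else 0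

/-- The disintegration map `𝒫(A × B) → 𝒫(A × 𝒫(B))`. -/
def disint [MeasurableSpace α] [MeasurableSpace β] [StandardBorelSpace β] [Nonempty β]
    (μ : Measure (α × β)) : Measure (α × Measure β) :=
  μ.map (fun z => (z.1, condK μ z.1))

/-- The intensity ("und") map `𝒫(A × 𝒫(B)) → 𝒫(A × B)`. -/
def und [MeasurableSpace α] [MeasurableSpace β] (μ : Measure (α × Measure β)) :
    Measure (α × β) :=
  μ.bind (fun z => (Measure.dirac z.1).prod z.2)

/-! ### Path spaces -/

variable {X : Type*} [MeasurableSpace X]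

/-- The path-space distance `ρ̄((x_t),(y_t)) = (∑ ρ(x_t,y_t)^p)^{1/p}`. -/
def pathDist (p : ℝ) (d : X → X → ℝ≥0∞) {N : ℕ} :
    (Fin N → X) → (Fin N → X) → ℝ≥0∞ :=
  fun x y => (∑ t, d (x t) (y t) ^ p) ^ (1 / p)

/-- The first `t` coordinates of a path. -/
def restr {N : ℕ} (t : ℕ) (h : t ≤ N) (x : Fin N → X) : Fin t → X :=
  fun s => x (Fin.castLE h s)

/-- The last `N - t` coordinates of a path. -/
def tailr {N : ℕ} (t : ℕ) (h : t ≤ N) (x : Fin N → X) : Fin (N - t) → X :=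
  fun s => x ⟨t + s.1, by have := s.2; omega⟩

/-- A coupling `π` of two path measures is causal: for every `t` and Borel
`A ⊆ 𝒳^t`, `π((Y_1,…,Y_t) ∈ A | X) = π((Y_1,…,Y_t) ∈ A | X_1,…,X_t)` a.s. -/
def Causal {N : ℕ} (π : Measure ((Fin N → X) × (Fin N → X))) : Prop :=
  ∀ (t : ℕ) (h : t ≤ N) (A : Set (Fin t → X)), MeasurableSet A →
    (π[fun z => A.indicator (fun _ => (1 : ℝ)) (restr t h z.2) |
        MeasurableSpace.comap Prod.fst inferInstance])
      =ᵐ[π]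
    (π[fun z => A.indicator (fun _ => (1 : ℝ)) (restr t h z.2) |
        MeasurableSpace.comap (fun z => restr t h z.1) inferInstance])

/-- Bicausal couplings. -/
def Bicausal {N : ℕ} (π : Measure ((Fin N → X) × (Fin N → X))) : Prop :=
  Causal π ∧ Causal (π.map Prod.swap)

/-- The causal Wasserstein "distance" `CW_p`. -/
def CW (p : ℝ) (d : X → X → ℝ≥0∞) {N : ℕ} (μ ν : Measure (Fin N → X)) : ℝ≥0∞ :=
  ⨅ π ∈ {π ∈ Cpl μ ν | Causal π}, (∫⁻ z, pathDist p d z.1 z.2 ^ p ∂π) ^ (1 / p)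

/-- The symmetrized causal Wasserstein distance `SCW_p`. -/
def SCW (p : ℝ) (d : X → X → ℝ≥0∞) {N : ℕ} (μ ν : Measure (Fin N → X)) : ℝ≥0∞ :=
  max (CW p d μ ν) (CW p d ν μ)

/-- The adapted (nested, bicausal) Wasserstein distance `AW_p`. -/
def AW (p : ℝ) (d : X → X → ℝ≥0∞) {N : ℕ} (μ ν : Measure (Fin N → X)) : ℝ≥0∞ :=
  ⨅ π ∈ {π ∈ Cpl μ ν | Bicausal π}, (∫⁻ z, pathDist p d z.1 z.2 ^ p ∂π) ^ (1 / p)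

/-! ### Nested spaces (Pflug's nested distributions / Vershik's iterated spaces) -/

/-- A measurable space together with an `ℝ≥0∞`-valued distance. -/
structure QMS : Type 1 where
  carrier : Type
  inst : MeasurableSpace carrier
  dist : carrier → carrier → ℝ≥0∞

/-- The nested sequence of spaces: `nest X _ d p 0 = 𝒳` (this is `𝒳_N`), and
`nest X _ d p (k+1) = 𝒳 × 𝒫(nest X _ d p k)` with the nested distance
`D = (ρ^p + 𝒲_p^p)^{1/p}`.  Thus `𝒳_1` (for `N = k+1` time points) is
`nest X _ d p k`. -/
def nest (X : Type) (mX : MeasurableSpace X) (d : X → X → ℝ≥0∞) (p : ℝ) : ℕ → QMS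
  | 0 => ⟨X, mX, d⟩
  | (k + 1) =>
    let Q := nest X mX d p k
    ⟨X × @Measure Q.carrier Q.inst,
      @Prod.instMeasurableSpace _ _ mX (@Measure.instMeasurableSpace _ Q.inst),
      fun a b => (d a.1 b.1 ^ p + (@Wp _ Q.inst p Q.dist a.2 b.2) ^ p) ^ (1 / p)⟩

section NMapSec

variable (Y : Type) [mY : MeasurableSpace Y] [TopologicalSpace Y] [PolishSpace Y]
  [BorelSpace Y] [Nonempty Y]

/-- The map `𝒩` sending the law of a process with `k+1` time steps to the
corresponding nested distribution, via iterated regular conditional laws. -/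
def NMap (d : Y → Y → ℝ≥0∞) (p : ℝ) :
    ∀ k : ℕ, Measure (Fin (k + 1) → Y) →
      @Measure (nest Y mY d p k).carrier (nest Y mY d p k).inst
  | 0, μ =>
    letI : MeasurableSpace (nest Y mY d p 0).carrier := (nest Y mY d p 0).inst
    μ.map (fun x => x 0)
  | (k + 1), μ =>
    letI : MeasurableSpace (nest Y mY d p k).carrier := (nest Y mY d p k).inst
    letI : MeasurableSpace (nest Y mY d p (k + 1)).carrier := (nest Y mY d p (k + 1)).inst
    (μ.map (fun x => x 0)).map
      (fun x₀ => (x₀, NMap d p k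
        ((condK (μ.map (fun x => (x 0, fun s : Fin (k + 1) => x s.succ)))) x₀)))

end NMapSec

section PathStructures

variable {Y : Type*} [mY : MeasurableSpace Y]

/-- A process `L` is adapted: `L t` depends only on the first `t+1` coordinates. -/
def AdaptedProc {N : ℕ} (L : Fin N → (Fin N → Y) → ℝ) : Prop :=
  ∀ (t : Fin N) (x y : Fin N → Y), (∀ s : Fin N, s ≤ t → x s = y s) → L t x = L t y

/-- `τ` is a stopping time of the canonical filtration on the path space. -/
def IsStopTime {N : ℕ} (τ : (Fin N → Y) → Fin N) : Prop :=
  ∀ t : Fin N,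
    MeasurableSet[MeasurableSpace.comap (restr (X := Y) (t.1 + 1) t.2) inferInstance]
      {x | τ x = t}

/-- The optimal stopping value `v^L(μ)`. -/
def stopVal {N : ℕ} (L : Fin N → (Fin N → Y) → ℝ) (μ : Measure (Fin N → Y)) : ℝ :=
  ⨅ τ : {τ : (Fin N → Y) → Fin N // IsStopTime τ}, ∫ x, L (τ.1 x) x ∂μ

variable [TopologicalSpace Y]

/-- `AC(X̄)`: adapted processes which are continuous and bounded. -/
def ACbdd {N : ℕ} (L : Fin N → (Fin N → Y) → ℝ) : Prop :=
  (∀ t, Continuous (L t)) ∧ AdaptedProc L ∧ ∃ C : ℝ, ∀ t x, |L t x| ≤ C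

/-- `AC_p(X̄)`: adapted continuous processes of growth of order `p`. -/
def ACp (p : ℝ) (d : Y → Y → ℝ≥0∞) {N : ℕ} (L : Fin N → (Fin N → Y) → ℝ) : Prop :=
  (∀ t, Continuous (L t)) ∧ AdaptedProc L ∧
    ∃ (C : ℝ) (x₀ : Fin N → Y), ∀ t x, |L t x| ≤ C * (1 + ((pathDist p d x₀ x) ^ p).toReal)

/-- The optimal stopping topology (weak version, bounded continuous rewards). -/
def stopTopW (N : ℕ) : TopologicalSpace (Measure (Fin N → Y)) :=
  ⨅ L : {L : Fin N → (Fin N → Y) → ℝ // ACbdd L},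
    TopologicalSpace.induced (stopVal L.1) inferInstance

/-- The `𝒲_p`-optimal stopping topology. -/
def stopTopWp (p : ℝ) (d : Y → Y → ℝ≥0∞) (N : ℕ) :
    TopologicalSpace (Measure (Fin N → Y)) :=
  ⨅ L : {L : Fin N → (Fin N → Y) → ℝ // ACp p d L},
    TopologicalSpace.induced (stopVal L.1) inferInstance

variable [PolishSpace Y] [BorelSpace Y] [Nonempty Y]

/-- Hellwig's map `I_t`, sending `μ` to the joint law of the first `t`
coordinates together with the conditional law of the remaining coordinates. -/
def infoMap (N t : ℕ) (h : t ≤ N) (μ : Measure (Fin N → Y)) :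
    Measure ((Fin t → Y) × Measure (Fin (N - t) → Y)) :=
  μ.map (fun x => (restr t h x,
    condK (μ.map (fun y => (restr t h y, tailr t h y))) (restr t h x)))

/-- Hellwig's information topology (weak version). -/
def infoTopW (N : ℕ) : TopologicalSpace (Measure (Fin N → Y)) :=
  ⨅ (t : ℕ) (_ : 1 ≤ t) (h : t ≤ N - 1),
    TopologicalSpace.induced (infoMap N t (le_trans h (Nat.sub_le N 1)))
      (weakTop (prodTop Pi.topologicalSpace (weakTop Pi.topologicalSpace)))

/-- The `𝒲_p`-information topology. -/
def infoTopWp (p : ℝ) (d : Y → Y → ℝ≥0∞) (N : ℕ) :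
    TopologicalSpace (Measure (Fin N → Y)) :=
  ⨅ (t : ℕ) (_ : 1 ≤ t) (h : t ≤ N - 1),
    TopologicalSpace.induced (infoMap N t (le_trans h (Nat.sub_le N 1)))
      (ballTop (Wp p (prodDist p (pathDist p d) (Wp p (pathDist p d)))))

/-- Aldous' prediction process `Z_t^μ` (as a function of the path). -/
def predict (N : ℕ) (μ : Measure (Fin N → Y)) (t : ℕ) (h : t ≤ N) :
    (Fin N → Y) → Measure (Fin N → Y) :=
  fun x => condK (μ.map (fun y => (restr t h y, y))) (restr t h x)

/-- Aldous' map `E`, sending `μ` to the joint law of the path together with its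
prediction process. -/
def aldousMap (N : ℕ) (μ : Measure (Fin N → Y)) :
    Measure ((Fin N → Y) × (Fin (N + 1) → Measure (Fin N → Y))) :=
  μ.map (fun x =>
    (x, fun t : Fin (N + 1) => predict N μ t.1 (Nat.lt_succ_iff.mp t.2) x))

/-- Aldous' extended weak topology. -/
def aldousTopW (N : ℕ) : TopologicalSpace (Measure (Fin N → Y)) :=
  TopologicalSpace.induced (aldousMap N)
    (weakTop (prodTop Pi.topologicalSpace
      (@Pi.topologicalSpace (Fin (N + 1)) (fun _ => Measure (Fin N → Y))
        (fun _ => weakTop Pi.topologicalSpace))))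

/-- The extended `𝒲_p`-topology. -/
def aldousTopWp (p : ℝ) (d : Y → Y → ℝ≥0∞) (N : ℕ) :
    TopologicalSpace (Measure (Fin N → Y)) :=
  TopologicalSpace.induced (aldousMap N)
    (ballTop (Wp p (prodDist p (pathDist p d)
      (fun Z Z' : Fin (N + 1) → Measure (Fin N → Y) =>
        (∑ t, Wp p (pathDist p d) (Z t) (Z' t) ^ p) ^ (1 / p)))))

end PathStructures

/-! ### The lifted two-time-point space `𝒳₁ × 𝒫_p(𝒳₂)` -/

section Lifted

variable {A B : Type*} [MeasurableSpace A] [MeasurableSpace B]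

/-- The nested distance on `𝒳₁ × 𝒫_p(𝒳₂)`. -/
def liftDist (p : ℝ) (dA : A → A → ℝ≥0∞) (dB : B → B → ℝ≥0∞) :
    (A × Measure B) → (A × Measure B) → ℝ≥0∞ :=
  fun u v => (dA u.1 v.1 ^ p + Wp p dB u.2 v.2 ^ p) ^ (1 / p)

/-- `η` is a version of the measure-valued conditional expectation
`E_γ[X̂₂ | Y⃗]` (i.e. the barycenter of a regular conditional law of `X̂₂`
given `Y⃗ = (Y₁, Ŷ₂)`). -/
def IsCondBar (γ : Measure ((A × Measure B) × (A × Measure B)))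
    (η : (A × Measure B) × (A × Measure B) → Measure B) : Prop :=
  (∃ g : (A × Measure B) → Measure B, Measurable g ∧ ∀ z, η z = g z.2) ∧
  (∀ z, IsProbabilityMeasure (η z)) ∧
  ∀ S : Set (A × Measure B), MeasurableSet S → ∀ E : Set B, MeasurableSet E →
    ∫⁻ z in {z | z.2 ∈ S}, η z E ∂γ = ∫⁻ z in {z | z.2 ∈ S}, z.1.2 E ∂γ

/-- `AW̄_p`, the `p`-Wasserstein distance on `𝒫_p(𝒳₁ × 𝒫_p(𝒳₂))`. -/
def AWbar (p : ℝ) (dA : A → A → ℝ≥0∞) (dB : B → B → ℝ≥0∞)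
    (μ ν : Measure (A × Measure B)) : ℝ≥0∞ :=
  Wp p (liftDist p dA dB) μ ν

/-- `CW̄_p`, the lifted causal Wasserstein "distance". -/
def CWbar (p : ℝ) (dA : A → A → ℝ≥0∞) (dB : B → B → ℝ≥0∞)
    (μ ν : Measure (A × Measure B)) : ℝ≥0∞ :=
  ⨅ γ ∈ Cpl μ ν, ⨅ η ∈ {η | IsCondBar γ η},
    (∫⁻ z, (dA z.1.1 z.2.1 ^ p + Wp p dB (η z) z.2.2 ^ p) ∂γ) ^ (1 / p)

/-- `SCW̄_p`, the symmetrization of `CW̄_p`. -/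
def SCWbar (p : ℝ) (dA : A → A → ℝ≥0∞) (dB : B → B → ℝ≥0∞)
    (μ ν : Measure (A × Measure B)) : ℝ≥0∞ :=
  max (CWbar p dA dB μ ν) (CWbar p dA dB ν μ)

/-- Membership in `𝒫_p(𝒳₁ × 𝒫_p(𝒳₂))`: a probability measure, concentrated on
`𝒳₁ × 𝒫_p(𝒳₂)`, with finite `p`-th moment for the nested distance. -/
def MemPpLift (p : ℝ) (dA : A → A → ℝ≥0∞) (dB : B → B → ℝ≥0∞)
    (μ : Measure (A × Measure B)) : Prop :=
  IsProbabilityMeasure μ ∧ (∀ᵐ z ∂μ, MemPp p dB z.2) ∧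
    ∃ z₀ : A × Measure B, MemPp p dB z₀.2 ∧ ∫⁻ z, liftDist p dA dB z₀ z ^ p ∂μ ≠ ∞

/-- Two-time-point causality: given a coupling `π` of measures on products
`A₁ × B₁` and `A₂ × B₂`, the conditional law of `Y₁` given `X = (X₁, X₂)`
coincides with the conditional law of `Y₁` given `X₁`. -/
def Causal2 {A₁ B₁ A₂ B₂ : Type*} [MeasurableSpace A₁] [MeasurableSpace B₁]
    [MeasurableSpace A₂] [MeasurableSpace B₂]
    (π : Measure ((A₁ × B₁) × (A₂ × B₂))) : Prop :=
  ∀ S : Set A₂, MeasurableSet S →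
    (π[fun z => S.indicator (fun _ => (1 : ℝ)) z.2.1 |
        MeasurableSpace.comap Prod.fst inferInstance])
      =ᵐ[π]
    (π[fun z => S.indicator (fun _ => (1 : ℝ)) z.2.1 |
        MeasurableSpace.comap (fun z => z.1.1) inferInstance])

/-- The two-time-point causal Wasserstein "distance" on `𝒫_p(𝒳₁ × 𝒳₂)`. -/
def CW2 (p : ℝ) (dA : A → A → ℝ≥0∞) (dB : B → B → ℝ≥0∞)
    (μ ν : Measure (A × B)) : ℝ≥0∞ :=
  ⨅ π ∈ {π ∈ Cpl μ ν | Causal2 π},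
    (∫⁻ z, (dA z.1.1 z.2.1 ^ p + dB z.1.2 z.2.2 ^ p) ∂π) ^ (1 / p)

end Lifted

/-!
Let `γ` couple `μ` and `ν`. Conditionally on everything else draw `X₂` from the measure `X̂₂`; then
the law of `(X₁, X₂)` is `und μ`, and the conditional law of `X₂` given `Y⃗` is the barycenter
`E_γ[X̂₂ | Y⃗]`.
Moving `X₂` to a point `Y₂` by an almost optimal transport from `E_γ[X̂₂ | Y⃗]` to `Ŷ₂` that depends
only on `Y⃗`, the law of `(Y₁, Y₂)` is `und ν`, and the cost of this coupling of `und μ` and `und ν`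
is almost the one in the definition of `CWbar`.

The transport has to depend measurably on `Y⃗`. It is selected from countably many explicit ones:
step functions with rational coefficients on countable partitions into small cells, read as
densities with respect to the product of the marginals, are scaled down to densities of partial
couplings and completed by the independent coupling of the left-over masses. On each pair of
marginals with finite moments their costs approximate the optimal one.
-/

section Wasserstein

variable {S T : Type*} [MeasurableSpace S] [MeasurableSpace T]

lemma Wp_rpow {p : ℝ} (hp : 0 < p) (d : S → S → ℝ≥0∞) (a b : Measure S) :
    Wp p d a b ^ p = ⨅ π ∈ Cpl a b, ∫⁻ z, d z.1 z.2 ^ p ∂π := by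
  simp_rw [Wp, ← ENNReal.orderIsoRpow_apply p hp, OrderIso.map_iInf, ENNReal.orderIsoRpow_apply,
    one_div, ENNReal.rpow_inv_rpow hp.ne']

lemma prodDist_rpow {U V : Type*} {p : ℝ} (hp : 0 < p) (d₁ : U → U → ℝ≥0∞) (d₂ : V → V → ℝ≥0∞)
    (u v : U × V) :
    prodDist p d₁ d₂ u v ^ p = d₁ u.1 v.1 ^ p + d₂ u.2 v.2 ^ p := by
  rw [prodDist, one_div, ENNReal.rpow_inv_rpow hp.ne']

lemma isProbabilityMeasure_of_mem_Cpl {a : Measure S} {b : Measure T} [IsProbabilityMeasure a]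
    {π : Measure (S × T)} (hπ : π ∈ Cpl a b) : IsProbabilityMeasure π :=
  have : IsProbabilityMeasure (π.map Prod.fst) := hπ.1 ▸ ‹_›
  Measure.isProbabilityMeasure_of_map Prod.fst

lemma map_prodMap_mem_Cpl {S' T' : Type*} [MeasurableSpace S'] [MeasurableSpace T']
    {a : Measure S} {b : Measure T} {π : Measure (S × T)} (hπ : π ∈ Cpl a b) {f : S → S'}
    {g : T → T'} (hf : Measurable f) (hg : Measurable g) :
    π.map (Prod.map f g) ∈ Cpl (a.map f) (b.map g) := by
  obtain ⟨rfl, rfl⟩ := hπ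
  constructor
  · rw [Measure.map_map (by fun_prop) (by fun_prop), Measure.map_map (by fun_prop) (by fun_prop)]
    rfl
  · rw [Measure.map_map (by fun_prop) (by fun_prop), Measure.map_map (by fun_prop) (by fun_prop)]
    rfl

end Wasserstein

section TransportDensity

variable {S T : Type*} [MeasurableSpace S] [MeasurableSpace T]

/-- A density `h` with respect to `a ⊗ b` whose sections all have integral at most one, i.e. the
density of a coupling of parts of `a` and `b`. -/
structure IsSubTransportDensity (a : Measure S) (b : Measure T) (h : S × T → ℝ≥0∞) : Prop where
  measurable : Measurable h
  lintegral_right_le_one : ∀ x, ∫⁻ y, h (x, y) ∂b ≤ 1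
  lintegral_left_le_one : ∀ y, ∫⁻ x, h (x, y) ∂a ≤ 1

/-- The density of a coupling of `a` and `b` with respect to `a ⊗ b`. The condition on the
sections in the second variable holds everywhere, so that the coupling comes with a transition
kernel defined by `h` at every point. -/
structure IsTransportDensity (a : Measure S) (b : Measure T) (h : S × T → ℝ≥0∞) : Prop where
  measurable : Measurable h
  lintegral_right_eq_one : ∀ x, ∫⁻ y, h (x, y) ∂b = 1
  lintegral_left_eq_one : ∀ᵐ y ∂b, ∫⁻ x, h (x, y) ∂a = 1

/-- The part of the mass of `a` near `x` that a sub-transport density leaves in place. -/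
def rowDefect (b : Measure T) (h : S × T → ℝ≥0∞) (x : S) : ℝ≥0∞ := 1 - ∫⁻ y, h (x, y) ∂b

/-- The part of the mass of `b` near `y` that a sub-transport density does not reach. -/
def colDefect (a : Measure S) (h : S × T → ℝ≥0∞) (y : T) : ℝ≥0∞ := 1 - ∫⁻ x, h (x, y) ∂a

/-- The total mass that a sub-transport density leaves in place. -/
def defectMass (a : Measure S) (b : Measure T) (h : S × T → ℝ≥0∞) : ℝ≥0∞ :=
  ∫⁻ x, rowDefect b h x ∂a

open Classical in
/-- The probability density along which the left-over mass is distributed. If nothing is left over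
the choice is irrelevant, and `1` keeps the total mass equal to one. -/
def defectDensity (a : Measure S) (b : Measure T) (h : S × T → ℝ≥0∞) (y : T) : ℝ≥0∞ :=
  if defectMass a b h = 0 then 1 else colDefect a h y / defectMass a b h

/-- The completion of a sub-transport density to a transport density, by the independent coupling
of the left-over masses. -/
def completion (a : Measure S) (b : Measure T) (h : S × T → ℝ≥0∞) (z : S × T) : ℝ≥0∞ :=
  h z + rowDefect b h z.1 * defectDensity a b h z.2

variable {a : Measure S} {b : Measure T} {h : S × T → ℝ≥0∞}

@[fun_prop]
lemma measurable_rowDefect [SFinite b] (hh : Measurable h) : Measurable (rowDefect b h) :=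
  measurable_const.sub hh.lintegral_prod_right'

@[fun_prop]
lemma measurable_colDefect [SFinite a] (hh : Measurable h) : Measurable (colDefect a h) :=
  measurable_const.sub hh.lintegral_prod_left'

@[fun_prop]
lemma measurable_defectDensity [SFinite a] (hh : Measurable h) : Measurable (defectDensity a b h) :=
  Measurable.ite (.const _) measurable_const ((measurable_colDefect hh).div_const _)

@[fun_prop]
lemma measurable_completion [SFinite a] [SFinite b] (hh : Measurable h) :
    Measurable (completion a b h) := by
  unfold completion
  fun_prop

lemma defectMass_ne_top [IsFiniteMeasure a] : defectMass a b h ≠ ∞ :=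
  ne_top_of_le_ne_top (measure_ne_top a .univ) <|
    (lintegral_mono fun _ ↦ tsub_le_self).trans_eq (by simp)

namespace IsSubTransportDensity

variable [IsProbabilityMeasure a] [IsProbabilityMeasure b]

lemma lintegral_colDefect (hh : IsSubTransportDensity a b h) :
    ∫⁻ y, colDefect a h y ∂b = defectMass a b h := by
  have hrow : ∫⁻ x, ∫⁻ y, h (x, y) ∂b ∂a ≠ ∞ :=
    ne_top_of_le_ne_top one_ne_top <| (lintegral_mono hh.lintegral_right_le_one).trans (by simp)
  have hcol : ∫⁻ y, ∫⁻ x, h (x, y) ∂a ∂b ≠ ∞ :=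
    ne_top_of_le_ne_top one_ne_top <| (lintegral_mono hh.lintegral_left_le_one).trans (by simp)
  simp only [defectMass, colDefect, rowDefect]
  rw [lintegral_sub hh.measurable.lintegral_prod_left' hcol (ae_of_all _ hh.lintegral_left_le_one),
    lintegral_sub hh.measurable.lintegral_prod_right' hrow (ae_of_all _ hh.lintegral_right_le_one),
    lintegral_lintegral_swap (f := fun y x ↦ h (x, y))
      (hh.measurable.comp measurable_swap).aemeasurable]
  simp

lemma lintegral_defectDensity (hh : IsSubTransportDensity a b h) :
    ∫⁻ y, defectDensity a b h y ∂b = 1 := by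
  by_cases hr : defectMass a b h = 0
  · simp [defectDensity, hr]
  · simp only [defectDensity, hr, if_false, div_eq_mul_inv]
    rw [lintegral_mul_const _ (measurable_colDefect hh.measurable), hh.lintegral_colDefect,
      ENNReal.mul_inv_cancel hr defectMass_ne_top]

lemma defectMass_mul_defectDensity (hh : IsSubTransportDensity a b h) :
    ∀ᵐ y ∂b, defectMass a b h * defectDensity a b h y = colDefect a h y := by
  by_cases hr : defectMass a b h = 0
  · have hcol : colDefect a h =ᵐ[b] 0 :=
      (lintegral_eq_zero_iff (measurable_colDefect hh.measurable)).1
        (hh.lintegral_colDefect.trans hr)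
    filter_upwards [hcol] with y hy
    simp [hr, hy]
  · refine ae_of_all _ fun y ↦ ?_
    simp only [defectDensity, hr, if_false]
    exact ENNReal.mul_div_cancel hr defectMass_ne_top

lemma isTransportDensity_completion (hh : IsSubTransportDensity a b h) :
    IsTransportDensity a b (completion a b h) where
  measurable := measurable_completion hh.measurable
  lintegral_right_eq_one x := by
    have := hh.measurable
    simp only [completion]
    rw [lintegral_add_left (by fun_prop), lintegral_const_mul _ (by fun_prop),
      hh.lintegral_defectDensity, mul_one]
    exact add_tsub_cancel_of_le (hh.lintegral_right_le_one x)
  lintegral_left_eq_one := by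
    have := hh.measurable
    filter_upwards [hh.defectMass_mul_defectDensity] with y hy
    simp only [completion]
    rw [lintegral_add_left (by fun_prop), lintegral_mul_const _ (by fun_prop), ← defectMass, hy]
    exact add_tsub_cancel_of_le (hh.lintegral_left_le_one y)

lemma lintegral_completion_mul_le (hh : IsSubTransportDensity a b h) {C : S × T → ℝ≥0∞}
    (hC : Measurable C) {φ : S → ℝ≥0∞} {ψ : T → ℝ≥0∞} (hφ : Measurable φ) (hψ : Measurable ψ)
    (hle : ∀ z, C z ≤ φ z.1 + ψ z.2) :
    ∫⁻ z, completion a b h z * C z ∂(a.prod b) ≤ ∫⁻ z, h z * C z ∂(a.prod b) +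
      (∫⁻ x, rowDefect b h x * φ x ∂a + ∫⁻ y, colDefect a h y * ψ y ∂b) := by
  have := hh.measurable
  let u := rowDefect b h
  let θ := defectDensity a b h
  have hu : Measurable u := by fun_prop
  have hθ : Measurable θ := by fun_prop
  calc ∫⁻ z, completion a b h z * C z ∂(a.prod b)
      ≤ ∫⁻ z, (h z * C z + (u z.1 * φ z.1 * θ z.2 + u z.1 * (θ z.2 * ψ z.2))) ∂(a.prod b) := by
        refine lintegral_mono fun z ↦ ?_
        calc completion a b h z * C z = h z * C z + u z.1 * θ z.2 * C z := add_mul _ _ _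
          _ ≤ h z * C z + u z.1 * θ z.2 * (φ z.1 + ψ z.2) := by gcongr; exact hle z
          _ = _ := by ring
    _ = ∫⁻ z, h z * C z ∂(a.prod b) + ((∫⁻ x, u x * φ x ∂a) * ∫⁻ y, θ y ∂b +
          (∫⁻ x, u x ∂a) * ∫⁻ y, θ y * ψ y ∂b) := by
        rw [lintegral_add_left (by fun_prop), lintegral_add_left (by fun_prop),
          lintegral_prod_mul (f := fun x ↦ u x * φ x) (by fun_prop) (by fun_prop),
          lintegral_prod_mul (g := fun y ↦ θ y * ψ y) (by fun_prop) (by fun_prop)]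
    _ = _ := by
        rw [hh.lintegral_defectDensity, mul_one, ← defectMass,
          ← lintegral_const_mul _ (by fun_prop)]
        congr 2
        refine lintegral_congr_ae ?_
        filter_upwards [hh.defectMass_mul_defectDensity] with y hy
        rw [← mul_assoc, hy]

end IsSubTransportDensity

/-- The density `h` scaled down to a sub-transport density. This is `h` itself if it already is
one. -/
def capped (a : Measure S) (b : Measure T) (h : S × T → ℝ≥0∞) (z : S × T) : ℝ≥0∞ :=
  h z / (max 1 (∫⁻ y, h (z.1, y) ∂b) * max 1 (∫⁻ x, h (x, z.2) ∂a))

lemma isSubTransportDensity_capped [SFinite a] [SFinite b] (hh : Measurable h) :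
    IsSubTransportDensity a b (capped a b h) where
  measurable := hh.div ((measurable_const.max (hh.lintegral_prod_right'.comp measurable_fst)).mul
    (measurable_const.max (hh.lintegral_prod_left'.comp measurable_snd)))
  lintegral_right_le_one x := by
    calc ∫⁻ y, capped a b h (x, y) ∂b ≤ ∫⁻ y, h (x, y) / max 1 (∫⁻ y, h (x, y) ∂b) ∂b :=
          lintegral_mono fun _ ↦
            ENNReal.div_le_div_left (le_mul_of_one_le_right' (le_max_left ..)) _
      _ = (∫⁻ y, h (x, y) ∂b) / max 1 (∫⁻ y, h (x, y) ∂b) := by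
          simp only [div_eq_mul_inv]
          exact lintegral_mul_const _ (hh.comp measurable_prodMk_left)
      _ ≤ 1 := ENNReal.div_le_of_le_mul (by simp)
  lintegral_left_le_one y := by
    calc ∫⁻ x, capped a b h (x, y) ∂a ≤ ∫⁻ x, h (x, y) / max 1 (∫⁻ x, h (x, y) ∂a) ∂a :=
          lintegral_mono fun _ ↦
            ENNReal.div_le_div_left (le_mul_of_one_le_left' (le_max_left ..)) _
      _ = (∫⁻ x, h (x, y) ∂a) / max 1 (∫⁻ x, h (x, y) ∂a) := by
          simp only [div_eq_mul_inv]
          exact lintegral_mul_const _ (hh.comp measurable_prodMk_right)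
      _ ≤ 1 := ENNReal.div_le_of_le_mul (by simp)

lemma IsSubTransportDensity.capped_eq (hh : IsSubTransportDensity a b h) : capped a b h = h := by
  ext z
  simp [capped, hh.lintegral_right_le_one, hh.lintegral_left_le_one]

/-- The transport density between `a` and `b` obtained from an arbitrary density by capping and
completing. -/
def transportDensity (a : Measure S) (b : Measure T) (h : S × T → ℝ≥0∞) : S × T → ℝ≥0∞ :=
  completion a b (capped a b h)

lemma isTransportDensity_transportDensity [IsProbabilityMeasure a] [IsProbabilityMeasure b]
    (hh : Measurable h) :
    IsTransportDensity a b (transportDensity a b h) :=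
  (isSubTransportDensity_capped hh).isTransportDensity_completion

end TransportDensity

lemma exists_measurable_le_iInf_add {Ω : Type*} [MeasurableSpace Ω] {f : ℕ → Ω → ℝ≥0∞}
    (hf : ∀ n, Measurable (f n)) {ε : ℝ≥0∞} (hε : ε ≠ 0) :
    ∃ N : Ω → ℕ, Measurable N ∧ ∀ ω, f (N ω) ω ≤ (⨅ n, f n ω) + ε := by
  classical
  have hex (ω : Ω) : ∃ n, f n ω ≤ (⨅ n, f n ω) + ε := by
    by_cases htop : ⨅ n, f n ω = ∞
    · exact ⟨0, by simp [htop]⟩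
    · obtain ⟨n, hn⟩ := iInf_lt_iff.1 (ENNReal.lt_add_right htop hε)
      exact ⟨n, hn.le⟩
  exact ⟨fun ω ↦ Nat.find (hex ω),
    measurable_find hex fun n ↦ measurableSet_le (hf n) ((Measurable.iInf hf).add_const ε),
    fun ω ↦ Nat.find_spec (hex ω)⟩

section TransitionKernel

variable {Ω S T : Type*} [MeasurableSpace Ω] [MeasurableSpace S] [MeasurableSpace T]

lemma IsTransportDensity.snd_withDensity {a : Measure S} {b : Measure T} [SFinite a] [SFinite b]
    {h : S × T → ℝ≥0∞} (hh : IsTransportDensity a b h) :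
    ((a.prod b).withDensity h).snd = b := by
  ext t ht
  have hm := hh.measurable
  calc ((a.prod b).withDensity h).snd t
      = ∫⁻ z, h z * t.indicator 1 z.2 ∂(a.prod b) := by
        rw [Measure.snd_apply ht, withDensity_apply _ (measurable_snd ht),
          ← lintegral_indicator (measurable_snd ht)]
        refine lintegral_congr fun z ↦ ?_
        by_cases hz : z.2 ∈ t <;> simp [hz]
    _ = ∫⁻ y, (∫⁻ x, h (x, y) ∂a) * t.indicator 1 y ∂b := by
        have : Measurable (t.indicator (1 : T → ℝ≥0∞)) := measurable_one.indicator ht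
        rw [lintegral_prod_symm _ (by fun_prop)]
        exact lintegral_congr fun y ↦
          lintegral_mul_const (t.indicator 1 y) (hm.comp measurable_prodMk_right)
    _ = ∫⁻ y, t.indicator 1 y ∂b := by
        refine lintegral_congr_ae ?_
        filter_upwards [hh.lintegral_left_eq_one] with y hy
        rw [hy, one_mul]
    _ = b t := lintegral_indicator_one ht

variable {H : Ω → S × T → ℝ≥0∞}

/-- The kernel moving the mass at `x` according to the density `H ω (x, ·)` with respect to
`κ₂ ω`. -/
def transitionKernel (κ₂ : Kernel Ω T) [IsSFiniteKernel κ₂] (H : Ω → S × T → ℝ≥0∞) :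
    Kernel (Ω × S) T :=
  (κ₂.comap Prod.fst measurable_fst).withDensity fun w y ↦ H w.1 (w.2, y)

variable {κ₁ : Kernel Ω S} {κ₂ : Kernel Ω T}

lemma transitionKernel_apply [IsSFiniteKernel κ₂] (hH : Measurable (Function.uncurry H))
    (w : Ω × S) : transitionKernel κ₂ H w = (κ₂ w.1).withDensity fun y ↦ H w.1 (w.2, y) :=
  have hH' : Measurable (Function.uncurry fun (w : Ω × S) y ↦ H w.1 (w.2, y)) :=
    hH.comp (f := fun v : (Ω × S) × T ↦ (v.1.1, (v.1.2, v.2))) (by fun_prop)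
  Kernel.withDensity_apply _ hH' w

lemma isMarkovKernel_transitionKernel [IsSFiniteKernel κ₂] (hH : Measurable (Function.uncurry H))
    (hH₁ : ∀ ω x, ∫⁻ y, H ω (x, y) ∂κ₂ ω = 1) : IsMarkovKernel (transitionKernel κ₂ H) where
  isProbabilityMeasure w := ⟨by
    rw [transitionKernel_apply hH, withDensity_apply _ .univ, Measure.restrict_univ, hH₁]⟩

lemma compProd_transitionKernel_apply [IsSFiniteKernel κ₁] [IsFiniteKernel κ₂]
    (hH : Measurable (Function.uncurry H)) (hH₁ : ∀ ω x, ∫⁻ y, H ω (x, y) ∂κ₂ ω = 1) (ω : Ω) :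
    (κ₁ ⊗ₖ transitionKernel κ₂ H) ω = ((κ₁ ω).prod (κ₂ ω)).withDensity (H ω) := by
  have := isMarkovKernel_transitionKernel hH hH₁
  have hHω : Measurable (H ω) := hH.of_uncurry_left
  ext s hs
  rw [Kernel.compProd_apply hs, withDensity_apply _ hs, ← lintegral_indicator hs,
    lintegral_prod _ (hHω.indicator hs).aemeasurable]
  refine lintegral_congr fun x ↦ ?_
  have hsx : MeasurableSet (Prod.mk x ⁻¹' s) := measurable_prodMk_left hs
  rw [transitionKernel_apply hH, withDensity_apply _ hsx, ← lintegral_indicator hsx]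
  rfl

end TransitionKernel

section Selection

variable {Ω S T : Type*} [MeasurableSpace Ω] [MeasurableSpace S] [MeasurableSpace T]
  (κ₁ : Kernel Ω S) (κ₂ : Kernel Ω T)

section Measurability

variable [IsSFiniteKernel κ₁] [IsSFiniteKernel κ₂] {H : Ω → S × T → ℝ≥0∞}

lemma measurable_lintegral_kernel_right (hH : Measurable (Function.uncurry H)) :
    Measurable fun w : Ω × S ↦ ∫⁻ y, H w.1 (w.2, y) ∂κ₂ w.1 :=
  Measurable.lintegral_kernel_prod_right' (κ := κ₂.comap Prod.fst measurable_fst) <|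
    hH.comp (f := fun w : (Ω × S) × T ↦ (w.1.1, (w.1.2, w.2))) (by fun_prop)

lemma measurable_lintegral_kernel_left (hH : Measurable (Function.uncurry H)) :
    Measurable fun w : Ω × T ↦ ∫⁻ x, H w.1 (x, w.2) ∂κ₁ w.1 :=
  Measurable.lintegral_kernel_prod_right' (κ := κ₁.comap Prod.fst measurable_fst) <|
    hH.comp (f := fun w : (Ω × T) × S ↦ (w.1.1, (w.2, w.1.2))) (by fun_prop)

lemma measurable_uncurry_capped (hH : Measurable (Function.uncurry H)) :
    Measurable (Function.uncurry fun ω ↦ capped (κ₁ ω) (κ₂ ω) (H ω)) := by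
  have hrow := (measurable_lintegral_kernel_right κ₂ hH).comp
    (f := fun w : Ω × (S × T) ↦ (w.1, w.2.1)) (by fun_prop)
  have hcol := (measurable_lintegral_kernel_left κ₁ hH).comp
    (f := fun w : Ω × (S × T) ↦ (w.1, w.2.2)) (by fun_prop)
  exact hH.div ((measurable_const.max hrow).mul (measurable_const.max hcol))

lemma measurable_uncurry_completion (hH : Measurable (Function.uncurry H)) :
    Measurable (Function.uncurry fun ω ↦ completion (κ₁ ω) (κ₂ ω) (H ω)) := by
  have hrow : Measurable fun w : Ω × S ↦ rowDefect (κ₂ w.1) (H w.1) w.2 :=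
    measurable_const.sub (measurable_lintegral_kernel_right κ₂ hH)
  have hcol : Measurable fun w : Ω × T ↦ colDefect (κ₁ w.1) (H w.1) w.2 :=
    measurable_const.sub (measurable_lintegral_kernel_left κ₁ hH)
  have hmass : Measurable fun ω ↦ defectMass (κ₁ ω) (κ₂ ω) (H ω) :=
    hrow.lintegral_kernel_prod_right'
  have hdensity : Measurable fun w : Ω × T ↦ defectDensity (κ₁ w.1) (κ₂ w.1) (H w.1) w.2 :=
    Measurable.ite (measurableSet_eq_fun (hmass.comp measurable_fst) measurable_const)
      measurable_const (hcol.div (hmass.comp measurable_fst))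
  exact hH.add ((hrow.comp (f := fun w : Ω × (S × T) ↦ (w.1, w.2.1)) (by fun_prop)).mul
    (hdensity.comp (f := fun w : Ω × (S × T) ↦ (w.1, w.2.2)) (by fun_prop)))

lemma measurable_uncurry_transportDensity {h : S × T → ℝ≥0∞} (hh : Measurable h) :
    Measurable (Function.uncurry fun ω ↦ transportDensity (κ₁ ω) (κ₂ ω) h) :=
  measurable_uncurry_completion κ₁ κ₂ <|
    measurable_uncurry_capped κ₁ κ₂ (H := fun _ ↦ h) (hh.comp measurable_snd)

end Measurability

variable [IsMarkovKernel κ₁] [IsMarkovKernel κ₂]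

lemma exists_measurable_transportDensity {ι : Type*} [Countable ι] [Nonempty ι]
    {h : ι → S × T → ℝ≥0∞} (hh : ∀ i, Measurable (h i)) {C : S × T → ℝ≥0∞} (hC : Measurable C)
    {ε : ℝ≥0∞} (hε : ε ≠ 0) :
    ∃ H : Ω → S × T → ℝ≥0∞, Measurable (Function.uncurry H) ∧
      (∀ ω, IsTransportDensity (κ₁ ω) (κ₂ ω) (H ω)) ∧
      ∀ ω, ∫⁻ z, H ω z * C z ∂(κ₁ ω).prod (κ₂ ω) ≤
        (⨅ i, ∫⁻ z, transportDensity (κ₁ ω) (κ₂ ω) (h i) z * C z ∂(κ₁ ω).prod (κ₂ ω)) + ε := by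
  obtain ⟨e, he⟩ := exists_surjective_nat ι
  let G (n : ℕ) (ω : Ω) : S × T → ℝ≥0∞ := transportDensity (κ₁ ω) (κ₂ ω) (h (e n))
  have hG (n : ℕ) : Measurable (Function.uncurry (G n)) :=
    measurable_uncurry_transportDensity κ₁ κ₂ (hh (e n))
  have hcost (n : ℕ) : Measurable fun ω ↦ ∫⁻ z, G n ω z * C z ∂(κ₁ ω).prod (κ₂ ω) := by
    simp_rw [← Kernel.prod_apply]
    exact ((hG n).mul (hC.comp measurable_snd)).lintegral_kernel_prod_right'
  obtain ⟨N, hN, hNle⟩ := exists_measurable_le_iInf_add hcost hε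
  have hGN : Measurable fun w : ℕ × (Ω × (S × T)) ↦ G w.1 w.2.1 w.2.2 :=
    measurable_from_prod_countable_right hG
  refine ⟨fun ω ↦ G (N ω) ω, hGN.comp ((hN.comp measurable_fst).prodMk measurable_id),
    fun ω ↦ isTransportDensity_transportDensity (hh _), fun ω ↦ (hNle ω).trans_eq ?_⟩
  rw [he.iInf_comp fun i ↦ ∫⁻ z, transportDensity (κ₁ ω) (κ₂ ω) (h i) z * C z ∂(κ₁ ω).prod (κ₂ ω)]

theorem exists_transport_kernel_lintegral_le {ι : Type*} [Countable ι] [Nonempty ι]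
    {h : ι → S × T → ℝ≥0∞} (hh : ∀ i, Measurable (h i)) {C : S × T → ℝ≥0∞} (hC : Measurable C)
    {ε : ℝ≥0∞} (hε : ε ≠ 0) :
    ∃ η : Kernel (Ω × S) T, IsMarkovKernel η ∧ (κ₁ ⊗ₖ η).snd = κ₂ ∧
      ∀ ω, ∫⁻ z, C z ∂(κ₁ ⊗ₖ η) ω ≤
        (⨅ i, ∫⁻ z, transportDensity (κ₁ ω) (κ₂ ω) (h i) z * C z ∂(κ₁ ω).prod (κ₂ ω)) + ε := by
  obtain ⟨H, hH, hHω, hle⟩ := exists_measurable_transportDensity κ₁ κ₂ hh hC hε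
  have happly (ω : Ω) := compProd_transitionKernel_apply (κ₁ := κ₁) hH
    (fun ω ↦ (hHω ω).lintegral_right_eq_one) ω
  refine ⟨transitionKernel κ₂ H,
    isMarkovKernel_transitionKernel hH fun ω ↦ (hHω ω).lintegral_right_eq_one, ?_, fun ω ↦ ?_⟩
  · ext1 ω
    rw [Kernel.snd_apply, happly]
    exact (hHω ω).snd_withDensity
  · rw [happly, lintegral_withDensity_eq_lintegral_mul _ (hHω ω).measurable hC]
    exact hle ω

end Selection

section Discretization

variable {S T : Type*} [MeasurableSpace S] [MeasurableSpace T]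

lemma IsSubTransportDensity.mono {a : Measure S} {b : Measure T} {g h : S × T → ℝ≥0∞}
    (hh : IsSubTransportDensity a b h) (hg : Measurable g) (hgh : ∀ z, g z ≤ h z) :
    IsSubTransportDensity a b g :=
  ⟨hg, fun x ↦ (lintegral_mono fun _ ↦ hgh _).trans (hh.lintegral_right_le_one x),
    fun y ↦ (lintegral_mono fun _ ↦ hgh _).trans (hh.lintegral_left_le_one y)⟩

lemma IsSubTransportDensity.comp_prodMap {ι ι' : Type*} [MeasurableSpace ι] [MeasurableSpace ι']
    {a : Measure S} {b : Measure T} {c : S → ι} {c' : T → ι'} (hc : Measurable c)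
    (hc' : Measurable c') {F : ι × ι' → ℝ≥0∞}
    (hF : IsSubTransportDensity (a.map c) (b.map c') F) :
    IsSubTransportDensity a b (F ∘ Prod.map c c') where
  measurable := hF.measurable.comp (hc.prodMap hc')
  lintegral_right_le_one x :=
    (lintegral_map (hF.measurable.comp measurable_prodMk_left) hc').symm.trans_le
      (hF.lintegral_right_le_one (c x))
  lintegral_left_le_one y :=
    (lintegral_map (hF.measurable.comp measurable_prodMk_right) hc).symm.trans_le
      (hF.lintegral_left_le_one (c' y))

lemma rowDefect_comp_prodMap {U V ι ι' : Type*} [MeasurableSpace V] [MeasurableSpace ι']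
    {b : Measure V} {c : U → ι} {c' : V → ι'} (hc' : Measurable c') {F : ι × ι' → ℝ≥0∞} {x : U}
    (hF : Measurable fun j ↦ F (c x, j)) :
    rowDefect b (F ∘ Prod.map c c') x = rowDefect (b.map c') F (c x) := by
  rw [rowDefect, rowDefect, lintegral_map hF hc']
  rfl

lemma tendsto_lintegral_rowDefect_mul {a : Measure S} {b : Measure T} [SFinite b]
    {g : ℕ → S × T → ℝ≥0∞} {F : S × T → ℝ≥0∞} (hg : ∀ n, Measurable (g n))
    (hle : ∀ n z, g n z ≤ F z) (hlim : ∀ z, Tendsto (fun n ↦ g n z) atTop (𝓝 (F z)))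
    (hfin : ∀ x, ∫⁻ y, F (x, y) ∂b ≠ ∞) (hF : ∀ᵐ x ∂a, rowDefect b F x = 0)
    {φ : S → ℝ≥0∞} (hφ : Measurable φ) (hφa : ∫⁻ x, φ x ∂a ≠ ∞) :
    Tendsto (fun n ↦ ∫⁻ x, rowDefect b (g n) x * φ x ∂a) atTop (𝓝 0) := by
  rw [← lintegral_zero (μ := a)]
  refine tendsto_lintegral_of_dominated_convergence φ (fun n ↦ ?_)
    (fun n ↦ ae_of_all _ fun x ↦ mul_le_of_le_one_left' tsub_le_self) hφa ?_
  · have := hg n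
    fun_prop
  filter_upwards [hF, ae_lt_top hφ hφa] with x hx hφx
  have hrow : Tendsto (fun n ↦ ∫⁻ y, g n (x, y) ∂b) atTop (𝓝 (∫⁻ y, F (x, y) ∂b)) :=
    tendsto_lintegral_of_dominated_convergence _
      (fun n ↦ (hg n).comp measurable_prodMk_left) (fun n ↦ ae_of_all _ fun _ ↦ hle n _)
      (hfin x) (ae_of_all _ fun _ ↦ hlim _)
  have hdefect : Tendsto (fun n ↦ rowDefect b (g n) x) atTop (𝓝 0) := by
    rw [← hx]
    exact ENNReal.Tendsto.sub tendsto_const_nhds hrow (.inl one_ne_top)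
  simpa using ENNReal.Tendsto.mul_const hdefect (.inr hφx.ne)

lemma IsSubTransportDensity.colDefect_ae_eq_zero {a : Measure S} {b : Measure T}
    [IsProbabilityMeasure a] [IsProbabilityMeasure b] {F : S × T → ℝ≥0∞}
    (hF : IsSubTransportDensity a b F) (hrow : ∀ᵐ x ∂a, rowDefect b F x = 0) :
    ∀ᵐ y ∂b, colDefect a F y = 0 := by
  refine (lintegral_eq_zero_iff (measurable_colDefect hF.measurable)).1 ?_
  rw [hF.lintegral_colDefect, defectMass, lintegral_congr_ae hrow, lintegral_zero]

lemma IsSubTransportDensity.exists_lintegral_transportDensity_mul_le {a : Measure S} {b : Measure T}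
    [IsProbabilityMeasure a] [IsProbabilityMeasure b] {F : S × T → ℝ≥0∞}
    (hF : IsSubTransportDensity a b F) (hrow : ∀ᵐ x ∂a, rowDefect b F x = 0)
    {g : ℕ → S × T → ℝ≥0∞} (hg : ∀ n, Measurable (g n)) (hle : ∀ n z, g n z ≤ F z)
    (hlim : ∀ z, Tendsto (fun n ↦ g n z) atTop (𝓝 (F z))) {C : S × T → ℝ≥0∞} (hC : Measurable C)
    {φ : S → ℝ≥0∞} {ψ : T → ℝ≥0∞} (hφ : Measurable φ) (hψ : Measurable ψ)
    (hCle : ∀ z, C z ≤ φ z.1 + ψ z.2) (hφa : ∫⁻ x, φ x ∂a ≠ ∞) (hψb : ∫⁻ y, ψ y ∂b ≠ ∞)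
    {ε : ℝ≥0∞} (hε : ε ≠ 0) :
    ∃ n, ∫⁻ z, transportDensity a b (g n) z * C z ∂(a.prod b) ≤
      ∫⁻ z, F z * C z ∂(a.prod b) + ε := by
  have hrow_lim := tendsto_lintegral_rowDefect_mul hg hle hlim
    (fun x ↦ ne_top_of_le_ne_top one_ne_top (hF.lintegral_right_le_one x)) hrow hφ hφa
  have hcol_lim : Tendsto (fun n ↦ ∫⁻ y, colDefect a (g n) y * ψ y ∂b) atTop (𝓝 0) :=
    tendsto_lintegral_rowDefect_mul (g := fun n ↦ g n ∘ Prod.swap) (F := F ∘ Prod.swap)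
      (fun n ↦ (hg n).comp measurable_swap) (fun n z ↦ hle n _) (fun z ↦ hlim _)
      (fun y ↦ ne_top_of_le_ne_top one_ne_top (hF.lintegral_left_le_one y))
      (hF.colDefect_ae_eq_zero hrow) hψ hψb
  have hlim_add := hrow_lim.add hcol_lim
  rw [add_zero] at hlim_add
  obtain ⟨n, hn⟩ := (hlim_add.eventually (ge_mem_nhds (pos_iff_ne_zero.2 hε))).exists
  have hgn : IsSubTransportDensity a b (g n) := hF.mono (hg n) (hle n)
  refine ⟨n, ?_⟩
  rw [transportDensity, hgn.capped_eq]
  exact (hgn.lintegral_completion_mul_le hC hφ hψ hCle).trans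
    (add_le_add (lintegral_mono fun z ↦ mul_le_mul_left (hle n z) _) hn)

section AtomDensity

variable {ι ι' : Type*} [MeasurableSpace ι] [MeasurableSpace ι']

/-- The density of `w` with respect to the product of its marginals, for `w` a finite measure on a
countable product. -/
def atomDensity (w : Measure (ι × ι')) (z : ι × ι') : ℝ≥0∞ := w {z} / (w.fst {z.1} * w.snd {z.2})

variable (w : Measure (ι × ι'))

lemma measure_singleton_le_fst [MeasurableSingletonClass ι] (z : ι × ι') :
    w {z} ≤ w.fst {z.1} := by
  rw [Measure.fst_apply (measurableSet_singleton _)]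
  exact measure_mono (by simp)

lemma measure_singleton_le_snd [MeasurableSingletonClass ι'] (z : ι × ι') :
    w {z} ≤ w.snd {z.2} := by
  rw [Measure.snd_apply (measurableSet_singleton _)]
  exact measure_mono (by simp)

lemma atomDensity_map_swap [MeasurableSingletonClass ι] [MeasurableSingletonClass ι']
    (z : ι × ι') : atomDensity (w.map Prod.swap) z.swap = atomDensity w z := by
  have hz : w.map Prod.swap {z.swap} = w {z} := by
    rw [Measure.map_apply measurable_swap (measurableSet_singleton _)]
    congr 1
    ext
    simp [Prod.ext_iff, and_comm]
  simp [atomDensity, hz, mul_comm]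

lemma lintegral_atomDensity_mul_le [MeasurableSingletonClass ι] [MeasurableSingletonClass ι']
    [Countable ι] [Countable ι'] [SFinite w] (D : ι × ι' → ℝ≥0∞) :
    ∫⁻ z, atomDensity w z * D z ∂(w.fst.prod w.snd) ≤ ∫⁻ z, D z ∂w := by
  rw [lintegral_countable', lintegral_countable']
  refine ENNReal.tsum_le_tsum fun z ↦ ?_
  have hz : (w.fst.prod w.snd) {z} = w.fst {z.1} * w.snd {z.2} := by
    rw [← Measure.prod_prod, Set.singleton_prod_singleton]
  calc atomDensity w z * D z * (w.fst.prod w.snd) {z}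
      = D z * (w.fst {z.1} * w.snd {z.2} * atomDensity w z) := by rw [hz]; ring
    _ ≤ D z * w {z} := by gcongr; exact ENNReal.mul_div_le

variable [IsFiniteMeasure w]

lemma atomDensity_ne_top [MeasurableSingletonClass ι] [MeasurableSingletonClass ι']
    (z : ι × ι') : atomDensity w z ≠ ∞ := by
  by_cases hz : w {z} = 0
  · simp [atomDensity, hz]
  · exact ENNReal.div_ne_top (measure_ne_top _ _) <| mul_ne_zero
      (fun h ↦ hz (le_zero_iff.1 (h ▸ measure_singleton_le_fst w z)))
      (fun h ↦ hz (le_zero_iff.1 (h ▸ measure_singleton_le_snd w z)))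

lemma atomDensity_mul_snd [MeasurableSingletonClass ι'] (z : ι × ι') :
    atomDensity w z * w.snd {z.2} = w {z} / w.fst {z.1} := by
  by_cases hz : w.snd {z.2} = 0
  · simp [hz, le_zero_iff.1 (hz ▸ measure_singleton_le_snd w z)]
  · rw [atomDensity, div_eq_mul_inv, ENNReal.mul_inv (.inr (measure_ne_top _ _)) (.inr hz),
      ← mul_assoc, mul_assoc _ _ (w.snd _), ENNReal.inv_mul_cancel hz (measure_ne_top _ _), mul_one,
      div_eq_mul_inv]

lemma lintegral_atomDensity_right [MeasurableSingletonClass ι] [MeasurableSingletonClass ι']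
    [Countable ι'] (i : ι) :
    ∫⁻ j, atomDensity w (i, j) ∂w.snd = w.fst {i} / w.fst {i} := by
  rw [lintegral_countable']
  have hsum : ∑' j, w {(i, j)} = w.fst {i} := by
    rw [Measure.fst_apply (measurableSet_singleton i),
      ← measure_iUnion (fun j k hjk ↦ by simpa [Function.onFun] using hjk)
        fun j ↦ measurableSet_singleton _]
    congr 1
    ext ⟨i', j⟩
    simp [eq_comm]
  simp_rw [fun j ↦ atomDensity_mul_snd w (i, j), div_eq_mul_inv, ENNReal.tsum_mul_right, hsum]

lemma lintegral_atomDensity_left [MeasurableSingletonClass ι] [MeasurableSingletonClass ι']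
    [Countable ι] (j : ι') :
    ∫⁻ i, atomDensity w (i, j) ∂w.fst = w.snd {j} / w.snd {j} := by
  simpa [← atomDensity_map_swap w] using lintegral_atomDensity_right (w.map Prod.swap) j

variable [MeasurableSingletonClass ι] [MeasurableSingletonClass ι'] [Countable ι] [Countable ι']

lemma isSubTransportDensity_atomDensity :
    IsSubTransportDensity w.fst w.snd (atomDensity w) where
  measurable := measurable_of_countable _
  lintegral_right_le_one i := lintegral_atomDensity_right w i ▸ ENNReal.div_self_le_one
  lintegral_left_le_one j := lintegral_atomDensity_left w j ▸ ENNReal.div_self_le_one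

lemma rowDefect_atomDensity : ∀ᵐ i ∂w.fst, rowDefect w.snd (atomDensity w) i = 0 := by
  refine ae_iff_of_countable.2 fun i hi ↦ ?_
  rw [rowDefect, lintegral_atomDensity_right, ENNReal.div_self hi (measure_ne_top _ _), tsub_self]

end AtomDensity

lemma exists_nnrat_seq_tendsto (x : NNReal) :
    ∃ u : ℕ → ℚ≥0, (∀ n, (u n : NNReal) ≤ x) ∧ Tendsto (fun n ↦ (u n : NNReal)) atTop (𝓝 x) := by
  refine ⟨fun n ↦ ⌊x * n⌋₊ / n, fun n ↦ ?_, ?_⟩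
  · push_cast
    exact div_le_of_le_mul₀ (by positivity) (by positivity) (Nat.floor_le (by positivity))
  · have hfloor (n : ℕ) : ⌊x * n⌋₊ = ⌊(x : ℝ) * n⌋₊ := rfl
    rw [← NNReal.tendsto_coe]
    simpa [Function.comp_def, hfloor] using
      (tendsto_nat_floor_mul_div_atTop x.2).comp (tendsto_natCast_atTop_atTop (R := ℝ))

lemma exists_finsupp_nnrat_seq_tendsto {κ : Type*} [Countable κ] {F : κ → ℝ≥0∞}
    (hF : ∀ k, F k ≠ ∞) :
    ∃ q : ℕ → κ →₀ ℚ≥0, (∀ n k, ((q n k : NNReal) : ℝ≥0∞) ≤ F k) ∧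
      ∀ k, Tendsto (fun n ↦ ((q n k : NNReal) : ℝ≥0∞)) atTop (𝓝 (F k)) := by
  classical
  lift F to κ → NNReal using hF
  choose u hu_le hu_lim using fun k ↦ exists_nnrat_seq_tendsto (F k)
  obtain ⟨e, he⟩ := Countable.exists_injective_nat κ
  let s (n : ℕ) : Finset κ := ((Set.finite_Iio n).preimage he.injOn).toFinset
  refine ⟨fun n ↦ Finsupp.indicator (s n) fun k _ ↦ u k n, fun n k ↦ ?_, fun k ↦ ?_⟩
  · by_cases hk : k ∈ s n
    · simpa [hk] using hu_le k n
    · simp [hk]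
  · refine (ENNReal.tendsto_coe.2 (hu_lim k)).congr' ?_
    filter_upwards [eventually_gt_atTop (e k)] with n hn
    simp [s, hn]

section Cells

variable {ι ι' : Type*} [MeasurableSpace ι] [MeasurableSpace ι'] [MeasurableSingletonClass ι]
  [MeasurableSingletonClass ι'] [Countable ι] [Countable ι'] {c : S → ι} {c' : T → ι'}

/-- The density that is constant on the cells `c ⁻¹' {i} ×ˢ c' ⁻¹' {j}`, with value `q (i, j)`. The
coefficients are rational and finitely supported, so that there are only countably many of them. -/
def stepDensity (c : S → ι) (c' : T → ι') (q : ι × ι' →₀ ℚ≥0) (z : S × T) : ℝ≥0∞ :=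
  ((q (Prod.map c c' z) : NNReal) : ℝ≥0∞)

lemma measurable_stepDensity (hc : Measurable c) (hc' : Measurable c') (q : ι × ι' →₀ ℚ≥0) :
    Measurable (stepDensity c c' q) :=
  (measurable_of_countable fun i ↦ ((q i : NNReal) : ℝ≥0∞)).comp (hc.prodMap hc')

lemma exists_lintegral_transportDensity_stepDensity_mul_le {a : Measure S} {b : Measure T}
    [IsProbabilityMeasure a] [IsProbabilityMeasure b] {π : Measure (S × T)} (hπ : π ∈ Cpl a b)
    (hc : Measurable c) (hc' : Measurable c') {C : S × T → ℝ≥0∞} (hC : Measurable C)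
    {φ : S → ℝ≥0∞} {ψ : T → ℝ≥0∞} (hφ : Measurable φ) (hψ : Measurable ψ)
    (hCle : ∀ z, C z ≤ φ z.1 + ψ z.2) (hφa : ∫⁻ x, φ x ∂a ≠ ∞) (hψb : ∫⁻ y, ψ y ∂b ≠ ∞)
    {D : ι × ι' → ℝ≥0∞} (hD : ∀ z, C z ≤ D (Prod.map c c' z)) {ε : ℝ≥0∞} (hε : ε ≠ 0) :
    ∃ q, ∫⁻ z, transportDensity a b (stepDensity c c' q) z * C z ∂(a.prod b) ≤
      ∫⁻ z, D (Prod.map c c' z) ∂π + ε := by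
  have hcc' : Measurable (Prod.map c c') := hc.prodMap hc'
  have hDm : Measurable D := measurable_of_countable _
  have := isProbabilityMeasure_of_mem_Cpl hπ
  let w : Measure (ι × ι') := π.map (Prod.map c c')
  have : IsProbabilityMeasure w := Measure.isProbabilityMeasure_map hcc'.aemeasurable
  obtain ⟨hfst, hsnd⟩ : w.fst = a.map c ∧ w.snd = b.map c' := map_prodMap_mem_Cpl hπ hc hc'
  have hw : IsSubTransportDensity (a.map c) (b.map c') (atomDensity w) :=
    hfst ▸ hsnd ▸ isSubTransportDensity_atomDensity w
  have hrow : ∀ᵐ i ∂a.map c, rowDefect (b.map c') (atomDensity w) i = 0 :=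
    hfst ▸ hsnd ▸ rowDefect_atomDensity w
  have hrow' : ∀ᵐ x ∂a, rowDefect b (atomDensity w ∘ Prod.map c c') x = 0 := by
    filter_upwards [ae_of_ae_map hc.aemeasurable hrow] with x hx
    rw [rowDefect_comp_prodMap hc' (measurable_of_countable _), hx]
  obtain ⟨q, hq, hqlim⟩ := exists_finsupp_nnrat_seq_tendsto (atomDensity_ne_top w)
  obtain ⟨n, hn⟩ := (hw.comp_prodMap hc hc').exists_lintegral_transportDensity_mul_le hrow'
    (fun n ↦ measurable_stepDensity hc hc' (q n)) (fun n z ↦ hq n _) (fun z ↦ hqlim _) hC hφ hψ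
    hCle hφa hψb hε
  refine ⟨q n, hn.trans (add_le_add_left ?_ ε)⟩
  calc ∫⁻ z, atomDensity w (Prod.map c c' z) * C z ∂(a.prod b)
      ≤ ∫⁻ z, atomDensity w (Prod.map c c' z) * D (Prod.map c c' z) ∂(a.prod b) :=
        lintegral_mono fun z ↦ mul_le_mul_right (hD z) _
    _ = ∫⁻ i, atomDensity w i * D i ∂(w.fst.prod w.snd) := by
        rw [hfst, hsnd, Measure.map_prod_map a b hc hc',
          lintegral_map (measurable_of_countable _) hcc']
    _ ≤ ∫⁻ i, D i ∂w := lintegral_atomDensity_mul_le w D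
    _ = ∫⁻ z, D (Prod.map c c' z) ∂π := lintegral_map hDm hcc'

end Cells

end Discretization

lemma eventually_lintegral_add_const_rpow_le {Ω ι : Type*} [MeasurableSpace Ω] {π : Measure Ω}
    [IsProbabilityMeasure π] {f : Ω → ℝ≥0∞} (hf : AEMeasurable f π) {p : ℝ} (hp : 1 ≤ p)
    (hfp : ∫⁻ ω, f ω ^ p ∂π ≠ ∞) {l : Filter ι} {u : ι → ℝ≥0∞} (hu : Tendsto u l (𝓝 0))
    {ε : ℝ≥0∞} (hε : ε ≠ 0) :
    ∀ᶠ k in l, ∫⁻ ω, (f ω + u k) ^ p ∂π ≤ ∫⁻ ω, f ω ^ p ∂π + ε := by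
  have hp₀ : 0 < p := by linarith
  let N : ℝ≥0∞ := (∫⁻ ω, f ω ^ p ∂π) ^ (1 / p)
  have hN : N ^ p = ∫⁻ ω, f ω ^ p ∂π := by simp only [N, one_div, ENNReal.rpow_inv_rpow hp₀.ne']
  have minkowski (k : ι) : ∫⁻ ω, (f ω + u k) ^ p ∂π ≤ (N + u k) ^ p := by
    rw [← ENNReal.rpow_inv_le_iff hp₀, ← one_div]
    refine (ENNReal.lintegral_Lp_add_le hf aemeasurable_const hp).trans_eq ?_
    simp [N, hp₀.ne']
  have hlim : Tendsto (fun k ↦ (N + u k) ^ p) l (𝓝 (∫⁻ ω, f ω ^ p ∂π)) := by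
    simpa [hN, Function.comp_def] using (ENNReal.continuous_rpow_const (y := p)).tendsto _ |>.comp
      (tendsto_const_nhds (x := N) |>.add hu)
  filter_upwards [hlim.eventually (ge_mem_nhds (ENNReal.lt_add_right hfp hε))] with k hk
  exact (minkowski k).trans hk

section Metric

variable {S : Type*} [PseudoEMetricSpace S]

lemma edist_rpow_le {p : ℝ} (hp : 1 ≤ p) (x y z : S) :
    edist x z ^ p ≤ 2 ^ (p - 1) * edist x y ^ p + 2 ^ (p - 1) * edist y z ^ p := by
  rw [← mul_add]
  exact (ENNReal.rpow_le_rpow (edist_triangle x y z) (by linarith)).trans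
    (ENNReal.rpow_add_le_mul_rpow_add_rpow _ _ hp)

lemma edist_le_add_of_prodMap_eq {ι : Type*} {c : S → ι} {δ : ℝ≥0∞}
    (hc : ∀ x y, c x = c y → edist x y ≤ δ) {z w : S × S} (h : Prod.map c c w = Prod.map c c z) :
    edist w.1 w.2 ≤ edist z.1 z.2 + 2 * δ := by
  calc edist w.1 w.2 ≤ edist w.1 z.1 + edist z.1 z.2 + edist z.2 w.2 := edist_triangle4 ..
    _ ≤ δ + edist z.1 z.2 + δ := by
      gcongr
      · exact hc _ _ (congr_arg Prod.fst h)
      · exact hc _ _ (congr_arg Prod.snd h).symm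
    _ = edist z.1 z.2 + 2 * δ := by ring

variable [SecondCountableTopology S] [MeasurableSpace S] [OpensMeasurableSpace S]

lemma exists_measurable_cells [Nonempty S] {ε : ℝ≥0∞} (hε : ε ≠ 0) :
    ∃ c : S → ℕ, Measurable c ∧ ∀ x y, c x = c y → edist x y ≤ ε := by
  classical
  have hex (x : S) : ∃ n, edist x (TopologicalSpace.denseSeq S n) < ε / 2 := by
    obtain ⟨-, ⟨n, rfl⟩, hn⟩ := EMetric.mem_closure_iff.1
      (TopologicalSpace.denseRange_denseSeq S x) (ε / 2) (ENNReal.half_pos hε)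
    exact ⟨n, hn⟩
  refine ⟨fun x ↦ Nat.find (hex x),
    measurable_find hex fun n ↦ measurableSet_lt (by fun_prop) measurable_const,
    fun x y (hxy : Nat.find (hex x) = Nat.find (hex y)) ↦ ?_⟩
  have hx := Nat.find_spec (hex x)
  rw [hxy] at hx
  calc edist x y ≤ ε / 2 + ε / 2 :=
        (edist_triangle_right ..).trans (add_le_add hx.le (Nat.find_spec (hex y)).le)
    _ = ε := ENNReal.add_halves ε

lemma lintegral_edist_rpow_ne_top_of_mem_Cpl {p : ℝ} (hp : 1 ≤ p) {a b : Measure S} {x₀ : S}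
    {π : Measure (S × S)} (hπ : π ∈ Cpl a b) (hb : ∫⁻ x, edist x₀ x ^ p ∂b ≠ ∞)
    (hπp : ∫⁻ z, edist z.1 z.2 ^ p ∂π ≠ ∞) :
    ∫⁻ x, edist x₀ x ^ p ∂a ≠ ∞ := by
  have h2 : (2 : ℝ≥0∞) ^ (p - 1) ≠ ∞ := by simp
  rw [← hπ.2, lintegral_map (by fun_prop) measurable_snd] at hb
  rw [← hπ.1, lintegral_map (by fun_prop) measurable_fst]
  refine ne_top_of_le_ne_top ?_ (lintegral_mono fun z : S × S ↦ edist_rpow_le hp x₀ z.2 z.1)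
  simp_rw [edist_comm _ (Prod.fst _)]
  rw [lintegral_add_left (by fun_prop), lintegral_const_mul _ (by fun_prop),
    lintegral_const_mul _ (by fun_prop)]
  exact ENNReal.add_ne_top.2 ⟨ENNReal.mul_ne_top h2 hb, ENNReal.mul_ne_top h2 hπp⟩

lemma exists_lintegral_transportDensity_stepDensity_mul_edist_rpow_le {p : ℝ} (hp : 1 ≤ p)
    {c : ℕ → S → ℕ} (hc : ∀ k, Measurable (c k)) {δ : ℕ → ℝ≥0∞}
    (hcδ : ∀ k x y, c k x = c k y → edist x y ≤ δ k) (hδ : Tendsto δ atTop (𝓝 0))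
    {a b : Measure S} [IsProbabilityMeasure a] [IsProbabilityMeasure b] {x₀ : S}
    (hb : ∫⁻ x, edist x₀ x ^ p ∂b ≠ ∞) {π : Measure (S × S)} (hπ : π ∈ Cpl a b)
    {ε : ℝ≥0∞} (hε : ε ≠ 0) :
    ∃ k q, ∫⁻ z, transportDensity a b (stepDensity (c k) (c k) q) z * edist z.1 z.2 ^ p
      ∂(a.prod b) ≤ ∫⁻ z, edist z.1 z.2 ^ p ∂π + ε := by
  obtain htop | hfin := eq_or_ne (∫⁻ z, edist z.1 z.2 ^ p ∂π) ∞
  · exact ⟨0, 0, by simp [htop]⟩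
  have := isProbabilityMeasure_of_mem_Cpl hπ
  have hδ2 : Tendsto (fun k ↦ 2 * δ k) atTop (𝓝 0) := by
    simpa using ENNReal.Tendsto.const_mul hδ (.inr ENNReal.ofNat_ne_top)
  have hε2 : ε / 2 ≠ 0 := (ENNReal.half_pos hε).ne'
  obtain ⟨k, hk⟩ := (eventually_lintegral_add_const_rpow_le
    (f := fun z : S × S ↦ edist z.1 z.2) (by fun_prop) hp hfin hδ2 hε2).exists
  let D (i : ℕ × ℕ) : ℝ≥0∞ :=
    ⨆ (z : S × S) (_ : Prod.map (c k) (c k) z = i), edist z.1 z.2 ^ p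
  have hD (z : S × S) : D (Prod.map (c k) (c k) z) ≤ (edist z.1 z.2 + 2 * δ k) ^ p :=
    iSup₂_le fun w hw ↦
      ENNReal.rpow_le_rpow (edist_le_add_of_prodMap_eq (hcδ k) hw) (by linarith)
  have hmoment {m : Measure S} (hm : ∫⁻ x, edist x₀ x ^ p ∂m ≠ ∞) :
      ∫⁻ x, 2 ^ (p - 1) * edist x₀ x ^ p ∂m ≠ ∞ := by
    rw [lintegral_const_mul _ (by fun_prop)]
    exact ENNReal.mul_ne_top (by simp) hm
  obtain ⟨q, hq⟩ := exists_lintegral_transportDensity_stepDensity_mul_le hπ (hc k) (hc k)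
    (by fun_prop) (by fun_prop) (by fun_prop)
    (fun z ↦ by simpa only [edist_comm z.1 x₀] using edist_rpow_le hp z.1 x₀ z.2)
    (hmoment (lintegral_edist_rpow_ne_top_of_mem_Cpl hp hπ hb hfin)) (hmoment hb)
    (D := D) (fun z ↦ le_iSup₂_of_le z rfl le_rfl) hε2
  refine ⟨k, q, ?_⟩
  calc _ ≤ ∫⁻ z, D (Prod.map (c k) (c k) z) ∂π + ε / 2 := hq
    _ ≤ ∫⁻ z, edist z.1 z.2 ^ p ∂π + ε / 2 + ε / 2 := by
      gcongr
      exact (lintegral_mono hD).trans hk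
    _ = ∫⁻ z, edist z.1 z.2 ^ p ∂π + ε := by rw [add_assoc, ENNReal.add_halves]

theorem exists_transport_kernel_lintegral_edist_rpow_le {Ω : Type*} [MeasurableSpace Ω]
    [Nonempty S] {p : ℝ} (hp : 1 ≤ p) (κ₁ κ₂ : Kernel Ω S) [IsMarkovKernel κ₁] [IsMarkovKernel κ₂]
    {ε : ℝ≥0∞} (hε : ε ≠ 0) :
    ∃ η : Kernel (Ω × S) S, IsMarkovKernel η ∧ (κ₁ ⊗ₖ η).snd = κ₂ ∧
      ∀ ω, MemPp p edist (κ₂ ω) →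
        ∫⁻ z, edist z.1 z.2 ^ p ∂(κ₁ ⊗ₖ η) ω ≤ Wp p edist (κ₁ ω) (κ₂ ω) ^ p + ε := by
  choose c hc hcδ using fun k : ℕ ↦
    exists_measurable_cells (S := S) (ε := (k : ℝ≥0∞)⁻¹) (by simp)
  obtain ⟨η, hη, hsnd, hle⟩ := exists_transport_kernel_lintegral_le κ₁ κ₂
    (h := fun i : ℕ × (ℕ × ℕ →₀ ℚ≥0) ↦ stepDensity (c i.1) (c i.1) i.2)
    (fun i ↦ measurable_stepDensity (hc _) (hc _) _) (C := fun z ↦ edist z.1 z.2 ^ p)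
    (by fun_prop) hε
  refine ⟨η, hη, hsnd, fun ω ⟨_, x₀, hx₀⟩ ↦ (hle ω).trans ?_⟩
  rw [Wp_rpow (by linarith)]
  gcongr
  refine le_iInf₂ fun π hπ ↦ ENNReal.le_of_forall_pos_le_add fun ε' hε' _ ↦ ?_
  obtain ⟨k, q, hkq⟩ := exists_lintegral_transportDensity_stepDensity_mul_edist_rpow_le hp hc hcδ
    ENNReal.tendsto_inv_nat_nhds_zero hx₀ hπ (ENNReal.coe_ne_zero.2 hε'.ne')
  exact (iInf_le _ (k, q)).trans hkq

end Metric

section Gluing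

variable {Ω Ω' S T : Type*} [MeasurableSpace Ω] [MeasurableSpace Ω'] [MeasurableSpace S]
  [MeasurableSpace T]

lemma map_prodMap_compProd_comap (ρ : Measure Ω) [SFinite ρ] {f : Ω → Ω'} (hf : Measurable f)
    (κ : Kernel Ω' S) [IsSFiniteKernel κ] :
    (ρ ⊗ₘ κ.comap f hf).map (Prod.map f id) = ρ.map f ⊗ₘ κ := by
  ext s hs
  rw [Measure.map_apply (by fun_prop) hs, Measure.compProd_apply (by measurability),
    Measure.compProd_apply hs, lintegral_map (Kernel.measurable_kernel_prodMk_left hs) hf]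
  rfl

lemma exists_measure_map_eq_compProd {f : Ω → Ω'} (hf : Measurable f) {ρ : Measure (Ω × S)}
    [SFinite ρ] {m : Measure Ω'} {κ : Kernel Ω' S} (hρ : ρ.map (Prod.map f id) = m ⊗ₘ κ)
    (η : Kernel (Ω' × S) T) [IsMarkovKernel η] :
    ∃ Λ : Measure (Ω × S × T), Λ.map (Prod.map id Prod.fst) = ρ ∧
      Λ.map (Prod.map f id) = m ⊗ₘ (κ ⊗ₖ η) := by
  have hfS : Measurable (Prod.map f id : Ω × S → Ω' × S) := hf.prodMap measurable_id
  refine ⟨(ρ ⊗ₘ η.comap (Prod.map f id) hfS).map MeasurableEquiv.prodAssoc, ?_, ?_⟩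
  · rw [Measure.map_map (by fun_prop) (by fun_prop)]
    exact Measure.fst_compProd ρ _
  · rw [Measure.map_map (by fun_prop) (by fun_prop), ← Measure.compProd_assoc', ← hρ,
      ← map_prodMap_compProd_comap, Measure.map_map (by fun_prop) (by fun_prop)]
    rfl

lemma map_fst_of_map_eq_compProd {Λ : Measure (Ω × S × T)} {ρ : Measure Ω} [SFinite ρ]
    {κ : Kernel Ω S} [IsMarkovKernel κ] (hΛ : Λ.map (Prod.map id Prod.fst) = ρ ⊗ₘ κ) :
    Λ.map Prod.fst = ρ := by
  rw [← Measure.fst_compProd ρ κ, ← hΛ, Measure.fst, Measure.map_map (by fun_prop) (by fun_prop)]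
  rfl

lemma lintegral_comp_snd_of_map_eq_compProd {f : Ω → Ω'} (hf : Measurable f) {ρ : Measure Ω}
    [SFinite ρ] {κ : Kernel Ω' S} [IsSFiniteKernel κ] {Λ : Measure (Ω × S)}
    (hΛ : Λ.map (Prod.map f id) = ρ.map f ⊗ₘ κ) {g : S → ℝ≥0∞} (hg : Measurable g) :
    ∫⁻ w, g w.2 ∂Λ = ∫⁻ z, ∫⁻ x, g x ∂κ (f z) ∂ρ := by
  calc ∫⁻ w, g w.2 ∂Λ = ∫⁻ w, g w.2 ∂Λ.map (Prod.map f id) :=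
        (lintegral_map (hg.comp measurable_snd) (hf.prodMap measurable_id)).symm
    _ = ∫⁻ z, ∫⁻ x, g x ∂κ (f z) ∂ρ := by
        rw [hΛ, Measure.lintegral_compProd (by fun_prop), lintegral_map hg.lintegral_kernel hf]

end Gluing

section Intensity

variable {A B : Type*} [MeasurableSpace A] [MeasurableSpace B]

open Classical in
/-- The kernel drawing a point from the measure in the second coordinate, with an arbitrary Dirac
measure as a junk value where that measure is not a probability measure. -/
def evalKernel (A B : Type*) [MeasurableSpace A] [MeasurableSpace B] [Nonempty B] :
    Kernel (A × Measure B) B where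
  toFun z := if z.2 Set.univ = 1 then z.2 else Measure.dirac (Classical.arbitrary B)
  measurable' := Measurable.ite
    (((Measure.measurable_coe .univ).comp measurable_snd) (measurableSet_singleton 1))
    measurable_snd measurable_const

lemma evalKernel_apply [Nonempty B] (z : A × Measure B) [IsProbabilityMeasure z.2] :
    evalKernel A B z = z.2 :=
  if_pos measure_univ

instance isMarkovKernel_evalKernel [Nonempty B] : IsMarkovKernel (evalKernel A B) where
  isProbabilityMeasure z := by
    by_cases hz : z.2 Set.univ = 1
    · have : IsProbabilityMeasure z.2 := ⟨hz⟩
      rwa [evalKernel_apply]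
    · have : evalKernel A B z = Measure.dirac (Classical.arbitrary B) := if_neg hz
      rw [this]
      infer_instance

lemma und_eq_map_compProd [Nonempty B] {μ : Measure (A × Measure B)} [SFinite μ]
    (hμ : ∀ᵐ z ∂μ, IsProbabilityMeasure z.2) :
    und μ = (μ ⊗ₘ evalKernel A B).map (Prod.map Prod.fst id) := by
  rw [Measure.compProd_eq_comp_prod, Measure.map_comp _ _ (by fun_prop)]
  refine Measure.bind_congr_right ?_
  filter_upwards [hμ] with z hz
  rw [Kernel.map_apply _ (by fun_prop), Kernel.prod_apply, Kernel.id_apply, evalKernel_apply,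
    ← Measure.map_prod_map _ _ (by fun_prop) (by fun_prop), Measure.map_dirac' measurable_fst,
    Measure.map_id]

variable {γ : Measure ((A × Measure B) × (A × Measure B))}
  {η : (A × Measure B) × (A × Measure B) → Measure B}

lemma IsCondBar.exists_kernel (hη : IsCondBar γ η) :
    ∃ κ : Kernel (A × Measure B) B, IsMarkovKernel κ ∧ ∀ z, η z = κ z.2 := by
  obtain ⟨⟨g, hg, hηg⟩, hη₁, -⟩ := hη
  refine ⟨⟨g, hg⟩, ⟨fun w ↦ ?_⟩, hηg⟩
  have := hη₁ (w, w)
  rwa [hηg] at this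

lemma IsCondBar.map_compProd_evalKernel [Nonempty B] [IsFiniteMeasure γ] (hη : IsCondBar γ η)
    (hγ : ∀ᵐ z ∂γ, IsProbabilityMeasure z.1.2) {κ : Kernel (A × Measure B) B} [IsMarkovKernel κ]
    (hκ : ∀ z, η z = κ z.2) :
    (γ ⊗ₘ (evalKernel A B).comap Prod.fst measurable_fst).map (Prod.map Prod.snd id) =
      γ.map Prod.snd ⊗ₘ κ := by
  refine Measure.ext_prod fun {s t} hs ht ↦ ?_
  have hs' : MeasurableSet {z : (A × Measure B) × (A × Measure B) | z.2 ∈ s} := measurable_snd hs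
  rw [Measure.map_apply (by fun_prop) (hs.prod ht)]
  calc (γ ⊗ₘ (evalKernel A B).comap Prod.fst measurable_fst) ({z | z.2 ∈ s} ×ˢ t)
      = ∫⁻ z in {z | z.2 ∈ s}, evalKernel A B z.1 t ∂γ := Measure.compProd_apply_prod hs' ht
    _ = ∫⁻ z in {z | z.2 ∈ s}, z.1.2 t ∂γ := by
        refine lintegral_congr_ae (ae_restrict_of_ae ?_)
        filter_upwards [hγ] with z hz
        rw [evalKernel_apply]
    _ = ∫⁻ z in {z | z.2 ∈ s}, κ z.2 t ∂γ := by simp_rw [← hη.2.2 s hs t ht, hκ]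
    _ = (γ.map Prod.snd ⊗ₘ κ) (s ×ˢ t) := by
        rw [Measure.compProd_apply_prod hs ht,
          setLIntegral_map hs (Kernel.measurable_coe _ ht) measurable_snd]
        rfl

lemma map_mem_Cpl_und [Nonempty B] {μ ν : Measure (A × Measure B)} [IsProbabilityMeasure μ]
    [SFinite ν] (hμ : ∀ᵐ z ∂μ, IsProbabilityMeasure z.2)
    (hν : ∀ᵐ z ∂ν, IsProbabilityMeasure z.2) (hγ : γ ∈ Cpl μ ν)
    {Λ : Measure (((A × Measure B) × (A × Measure B)) × B × B)}
    (hΛ₁ : Λ.map (Prod.map id Prod.fst) = γ ⊗ₘ (evalKernel A B).comap Prod.fst measurable_fst)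
    {θ : Kernel (A × Measure B) (B × B)} [IsMarkovKernel θ] (hθ : θ.snd = evalKernel A B)
    (hΛ₂ : Λ.map (Prod.map Prod.snd id) = ν ⊗ₘ θ) :
    Λ.map (fun w ↦ ((w.1.1.1, w.2.1), (w.1.2.1, w.2.2))) ∈ Cpl (und μ) (und ν) := by
  have := isProbabilityMeasure_of_mem_Cpl hγ
  constructor
  · rw [und_eq_map_compProd hμ, ← hγ.1, ← map_prodMap_compProd_comap _ measurable_fst, ← hΛ₁,
      Measure.map_map (by fun_prop) (by fun_prop), Measure.map_map (by fun_prop) (by fun_prop),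
      Measure.map_map (by fun_prop) (by fun_prop)]
    rfl
  · rw [und_eq_map_compProd hν, ← hθ, Kernel.snd_eq, Measure.compProd_map measurable_snd, ← hΛ₂,
      Measure.map_map (by fun_prop) (by fun_prop), Measure.map_map (by fun_prop) (by fun_prop),
      Measure.map_map (by fun_prop) (by fun_prop)]
    rfl

end Intensity

section Contraction

variable {A B : Type*} [MeasurableSpace A] [PseudoEMetricSpace B] [SecondCountableTopology B]
  [MeasurableSpace B] [OpensMeasurableSpace B] {dA : A → A → ℝ≥0∞} {p : ℝ}
  {μ ν : Measure (A × Measure B)} [IsProbabilityMeasure μ] [IsProbabilityMeasure ν]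

lemma exists_mem_Cpl_und_lintegral_prodDist_rpow_le (hdA : Measurable (Function.uncurry dA))
    (hp : 1 ≤ p) (hμ : ∀ᵐ z ∂μ, IsProbabilityMeasure z.2) (hν : ∀ᵐ z ∂ν, MemPp p edist z.2)
    {γ : Measure ((A × Measure B) × (A × Measure B))} (hγ : γ ∈ Cpl μ ν)
    {η : (A × Measure B) × (A × Measure B) → Measure B} (hη : IsCondBar γ η)
    {ε : ℝ≥0∞} (hε : ε ≠ 0) :
    ∃ π ∈ Cpl (und μ) (und ν), ∫⁻ z, prodDist p dA edist z.1 z.2 ^ p ∂π ≤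
      ∫⁻ z, (dA z.1.1 z.2.1 ^ p + Wp p edist (η z) z.2.2 ^ p) ∂γ + ε := by
  have := isProbabilityMeasure_of_mem_Cpl hγ
  obtain ⟨-, -, x₀, -⟩ := hν.exists
  have : Nonempty B := ⟨x₀⟩
  have hγ₁ : ∀ᵐ z ∂γ, IsProbabilityMeasure z.1.2 :=
    ae_of_ae_map measurable_fst.aemeasurable (hγ.1.symm ▸ hμ)
  have hγ₂ : ∀ᵐ z ∂γ, MemPp p edist z.2.2 :=
    ae_of_ae_map measurable_snd.aemeasurable (hγ.2.symm ▸ hν)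
  obtain ⟨κ, _, hκ⟩ := hη.exists_kernel
  obtain ⟨τ, _, hτ, hcost⟩ :=
    exists_transport_kernel_lintegral_edist_rpow_le hp κ (evalKernel A B) hε
  obtain ⟨Λ, hΛ₁, hΛ₂⟩ := exists_measure_map_eq_compProd measurable_snd
    (hη.map_compProd_evalKernel hγ₁ hκ) τ
  have hΛγ : Λ.map Prod.fst = γ := map_fst_of_map_eq_compProd hΛ₁
  have hfirst : ∫⁻ w, dA w.1.1.1 w.1.2.1 ^ p ∂Λ = ∫⁻ z, dA z.1.1 z.2.1 ^ p ∂γ := by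
    rw [← hΛγ, lintegral_map (by fun_prop) measurable_fst]
  have hsecond : ∫⁻ w, edist w.2.1 w.2.2 ^ p ∂Λ ≤ ∫⁻ z, Wp p edist (η z) z.2.2 ^ p ∂γ + ε := by
    calc ∫⁻ w, edist w.2.1 w.2.2 ^ p ∂Λ
        = ∫⁻ z, ∫⁻ x, edist x.1 x.2 ^ p ∂(κ ⊗ₖ τ) z.2 ∂γ :=
          lintegral_comp_snd_of_map_eq_compProd measurable_snd hΛ₂
            (g := fun x ↦ edist x.1 x.2 ^ p) (by fun_prop)
      _ ≤ ∫⁻ z, (Wp p edist (η z) z.2.2 ^ p + ε) ∂γ := by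
          refine lintegral_mono_ae ?_
          filter_upwards [hγ₂] with z hz
          have := hz.1
          simpa [evalKernel_apply, ← hκ, hz] using hcost z.2
      _ = ∫⁻ z, Wp p edist (η z) z.2.2 ^ p ∂γ + ε := by simp [lintegral_add_right]
  refine ⟨_, map_mem_Cpl_und hμ (hν.mono fun z hz ↦ hz.1) hγ hΛ₁ hτ (hγ.2 ▸ hΛ₂), ?_⟩
  calc _ = ∫⁻ w, (dA w.1.1.1 w.1.2.1 ^ p + edist w.2.1 w.2.2 ^ p) ∂Λ := by
        simp_rw [prodDist_rpow (zero_lt_one.trans_le hp)]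
        rw [lintegral_map (by fun_prop) (by fun_prop)]
    _ ≤ _ := by
        rw [lintegral_add_left (by fun_prop), lintegral_add_left (by fun_prop), hfirst, add_assoc]
        gcongr

theorem und_contraction_general (hdA : Measurable (Function.uncurry dA)) (hp : 1 ≤ p)
    (hμ : ∀ᵐ z ∂μ, IsProbabilityMeasure z.2) (hν : ∀ᵐ z ∂ν, MemPp p edist z.2) :
    Wp p (prodDist p dA edist) (und μ) (und ν) ≤ CWbar p dA edist μ ν := by
  have hp₀ : 0 < p := by linarith
  refine le_iInf₂ fun γ hγ ↦ le_iInf₂ fun η hη ↦ ?_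
  rw [one_div, ENNReal.le_rpow_inv_iff hp₀, Wp_rpow hp₀]
  refine ENNReal.le_of_forall_pos_le_add fun ε hε _ ↦ ?_
  obtain ⟨π, hπ, hle⟩ := exists_mem_Cpl_und_lintegral_prodDist_rpow_le hdA hp hμ hν hγ hη
    (ENNReal.coe_ne_zero.2 hε.ne')
  exact (iInf₂_le π hπ).trans hle

end Contraction

/-- **Lemma 4.14.**  The intensity map `und` is a contraction from
`(𝒫_p(𝒳₁ × 𝒫_p(𝒳₂)), SCW̄_p)` to `(𝒫_p(𝒳₁ × 𝒳₂), 𝒲_p)`; more precisely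
`𝒲_p(und μ, und ν) ≤ CW̄_p(μ, ν)`. -/
theorem und_contraction
    {X1 X2 : Type} [MetricSpace X1] [CompleteSpace X1] [SecondCountableTopology X1]
    [MeasurableSpace X1] [BorelSpace X1] [Nonempty X1]
    [MetricSpace X2] [CompleteSpace X2] [SecondCountableTopology X2]
    [MeasurableSpace X2] [BorelSpace X2] [Nonempty X2]
    (p : ℝ) (hp : 1 ≤ p) :
    let dA : X1 → X1 → ℝ≥0∞ := edist
    let dB : X2 → X2 → ℝ≥0∞ := edist
    (∀ μ ν : Measure (X1 × Measure X2), MemPpLift p dA dB μ → MemPpLift p dA dB ν →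
        Wp p (prodDist p dA dB) (und μ) (und ν) ≤ CWbar p dA dB μ ν) ∧
    (∀ μ ν : Measure (X1 × Measure X2), MemPpLift p dA dB μ → MemPpLift p dA dB ν →
        Wp p (prodDist p dA dB) (und μ) (und ν) ≤ SCWbar p dA dB μ ν) := by
  intro dA dB
  have hle (μ ν : Measure (X1 × Measure X2)) (hμ : MemPpLift p dA dB μ)
      (hν : MemPpLift p dA dB ν) : Wp p (prodDist p dA dB) (und μ) (und ν) ≤ CWbar p dA dB μ ν :=
    have := hμ.1
    have := hν.1
    und_contraction_general measurable_edist hp (hμ.2.1.mono fun _ h ↦ h.1) hν.2.1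
  exact ⟨hle, fun μ ν hμ hν ↦ (hle μ ν hμ hν).trans (le_max_left _ _)⟩

end AWPaper
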